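/- Assume char k = 0 and let T be a codimension three Gorenstein sequence. Then the subset of the (irreducible) parameter variety Gor(T) consisting of strong Lefschetz Artinian Gorenstein algebras is a nonempty Zariski open (hence dense) subset; i.e., a general codimension three Artinian Gorenstein algebra of Hilbert function T is strong Lefschetz. -/

import Mathlib

/- Common background: standard graded Artinian (Gorenstein) quotients of a
polynomial ring, their graded pieces, Hilbert function, socle degree,
Lefschetz-type conditions, and Macaulay contraction duality. -/

noncomputable section
open MvPolynomial
open scoped Classical

variable {K : Type*} [Field K] {n : ℕ}

/-- The degree-`i` graded component of `R/I`: the image in the quotient of the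
homogeneous polynomials of degree `i`. -/
def gradedPiece (I : Ideal (MvPolynomial (Fin n) K)) (i : ℕ) :
    Submodule K (MvPolynomial (Fin n) K ⧸ I) :=
  (homogeneousSubmodule (Fin n) K i).map (Ideal.Quotient.mkₐ K I).toLinearMap

/-- The Hilbert function of `R/I`. -/
def hilbFn (I : Ideal (MvPolynomial (Fin n) K)) (i : ℕ) : ℕ :=
  Module.finrank K (gradedPiece I i)

/-- `I` is a homogeneous ideal. -/
def IsHomogIdeal (I : Ideal (MvPolynomial (Fin n) K)) : Prop :=
  ∀ p ∈ I, ∀ i, homogeneousComponent i p ∈ I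

/-- The socle of `R/I`: elements killed by every variable. -/
def socleSub (I : Ideal (MvPolynomial (Fin n) K)) :
    Submodule K (MvPolynomial (Fin n) K ⧸ I) :=
  ⨅ v : Fin n, LinearMap.ker (LinearMap.mulLeft K (Ideal.Quotient.mk I (X v)))

/-- `R/I` is a standard graded Artinian Gorenstein algebra. -/
def IsAG (I : Ideal (MvPolynomial (Fin n) K)) : Prop :=
  IsHomogIdeal I ∧ I ≠ ⊤ ∧ FiniteDimensional K (MvPolynomial (Fin n) K ⧸ I) ∧
    Module.finrank K (socleSub I) = 1

/-- The socle degree: the top degree with nonzero component. -/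
def socDeg (I : Ideal (MvPolynomial (Fin n) K)) : ℕ :=
  sSup {i | hilbFn I i ≠ 0}

/-- Multiplication by `ℓ ^ d` maps `A_u` bijectively onto `A_v`. -/
def PowMulBij (I : Ideal (MvPolynomial (Fin n) K)) (ℓ : MvPolynomial (Fin n) K ⧸ I)
    (d u v : ℕ) : Prop :=
  (∀ a ∈ gradedPiece I u, ℓ ^ d * a = 0 → a = 0) ∧
  (∀ b ∈ gradedPiece I v, ∃ a ∈ gradedPiece I u, ℓ ^ d * a = b)

/-- `(A, ℓ)` is a strong Lefschetz pair: `ℓ^(j-2i) : A_i → A_(j-i)` is bijective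
for all `0 ≤ i ≤ ⌊j/2⌋`, `j` the socle degree. -/
def SLPair (I : Ideal (MvPolynomial (Fin n) K)) (ℓ : MvPolynomial (Fin n) K ⧸ I) : Prop :=
  ∀ i, 2 * i ≤ socDeg I → PowMulBij I ℓ (socDeg I - 2 * i) i (socDeg I - i)

/-- `A = R/I` has the strong Lefschetz property. -/
def StrongLefschetz (I : Ideal (MvPolynomial (Fin n) K)) : Prop :=
  ∃ ℓ ∈ gradedPiece I 1, SLPair I ℓ

/-- Contraction of `F` by the monomial `x^d`. -/
def contractMon (d : Fin n →₀ ℕ) (F : MvPolynomial (Fin n) K) : MvPolynomial (Fin n) K :=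
  ∑ e ∈ F.support, if d ≤ e then monomial (e - d) (coeff e F) else 0

/-- Contraction action of a polynomial `p` on `F` (Macaulay duality pairing). -/
def contract (p F : MvPolynomial (Fin n) K) : MvPolynomial (Fin n) K :=
  ∑ d ∈ p.support, coeff d p • contractMon d F

/-- A linear functional on polynomials which only sees the homogeneous part of degree `j`. -/
def IsConcentrated (φ : MvPolynomial (Fin n) K →ₗ[K] K) (j : ℕ) : Prop :=
  ∀ i, i ≠ j → ∀ p : MvPolynomial (Fin n) K, p.IsHomogeneous i → φ p = 0

/-- The largest ideal contained in the kernel of a linear functional. -/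
def annIdeal (φ : MvPolynomial (Fin n) K →ₗ[K] K) : Ideal (MvPolynomial (Fin n) K) where
  carrier := {p | ∀ r, φ (p * r) = 0}
  add_mem' {p q} hp hq r := by
    rw [add_mul, map_add, hp r, hq r, add_zero]
  zero_mem' r := by simp
  smul_mem' c p hp r := by
    rw [smul_eq_mul, mul_comm c p, mul_assoc]
    exact hp _

theorem mem_annIdeal {φ : MvPolynomial (Fin n) K →ₗ[K] K} {p : MvPolynomial (Fin n) K} :
    p ∈ annIdeal φ ↔ ∀ r, φ (p * r) = 0 := Iff.rfl

theorem IsConcentrated.apply_mul {φ : MvPolynomial (Fin n) K →ₗ[K] K} {j : ℕ}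
    (hφ : IsConcentrated φ j) {i k : ℕ} (hik : i + k = j) {p : MvPolynomial (Fin n) K}
    (hp : p.IsHomogeneous i) (r : MvPolynomial (Fin n) K) :
    φ (p * r) = φ (p * homogeneousComponent k r) := by
  have h : ∀ m, m ≠ k → φ (p * homogeneousComponent m r) = 0 := fun m hm =>
    hφ (i + m) (by omega) _ (hp.mul (homogeneousComponent_isHomogeneous m r))
  conv_lhs => rw [← sum_homogeneousComponent r, Finset.mul_sum, map_sum]
  rw [Finset.sum_eq_single k (fun m _ hm => h m hm)]
  intro hk
  rw [homogeneousComponent_eq_zero, mul_zero, map_zero]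
  simpa using hk

theorem IsConcentrated.apply_mul_eq_zero {φ : MvPolynomial (Fin n) K →ₗ[K] K} {j : ℕ}
    (hφ : IsConcentrated φ j) {i : ℕ} (hij : j < i) {p : MvPolynomial (Fin n) K}
    (hp : p.IsHomogeneous i) (r : MvPolynomial (Fin n) K) : φ (p * r) = 0 := by
  rw [← sum_homogeneousComponent r, Finset.mul_sum, map_sum]
  exact Finset.sum_eq_zero fun m _ =>
    hφ (i + m) (by omega) _ (hp.mul (homogeneousComponent_isHomogeneous m r))

theorem IsConcentrated.mem_annIdeal_iff {φ : MvPolynomial (Fin n) K →ₗ[K] K} {j : ℕ}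
    (hφ : IsConcentrated φ j) {i k : ℕ} (hik : i + k = j) {p : MvPolynomial (Fin n) K}
    (hp : p.IsHomogeneous i) :
    p ∈ annIdeal φ ↔ ∀ r : MvPolynomial (Fin n) K, r.IsHomogeneous k → φ (p * r) = 0 :=
  ⟨fun h r _ => h r, fun h r => by
    rw [hφ.apply_mul hik hp]
    exact h _ (homogeneousComponent_isHomogeneous k r)⟩

instance finite_homogeneousSubmodule (i : ℕ) :
    FiniteDimensional K (homogeneousSubmodule (Fin n) K i) :=
  Module.Finite.iff_fg.mpr (homogeneousSubmodule_fg (Fin n) K i)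

/-- The degree `i` part of an ideal. -/
def idealPiece (I : Ideal (MvPolynomial (Fin n) K)) (i : ℕ) :
    Submodule K (MvPolynomial (Fin n) K) :=
  homogeneousSubmodule (Fin n) K i ⊓ I.restrictScalars K

theorem mem_idealPiece {I : Ideal (MvPolynomial (Fin n) K)} {i : ℕ}
    {p : MvPolynomial (Fin n) K} : p ∈ idealPiece I i ↔ p.IsHomogeneous i ∧ p ∈ I := Iff.rfl

instance finite_idealPiece (I : Ideal (MvPolynomial (Fin n) K)) (i : ℕ) :
    FiniteDimensional K (idealPiece I i) :=
  Submodule.finiteDimensional_of_le (inf_le_left : _ ≤ homogeneousSubmodule (Fin n) K i)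

/-- Rank-nullity for a linear map restricted to a submodule, with the kernel described inside
the ambient space. -/
theorem finrank_map_add_finrank_inf_ker {V W : Type*} [AddCommGroup V] [Module K V]
    [AddCommGroup W] [Module K W] (f : V →ₗ[K] W) (p : Submodule K V) [FiniteDimensional K p] :
    Module.finrank K (p.map f) + Module.finrank K (p ⊓ LinearMap.ker f : Submodule K V) =
      Module.finrank K p := by
  have h := LinearMap.finrank_range_add_finrank_ker (f.domRestrict p)
  rw [LinearMap.range_domRestrict] at h
  rw [← h, (Submodule.equivMapOfInjective p.subtype p.injective_subtype
    (LinearMap.ker (f.domRestrict p))).finrank_eq]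
  congr 1
  refine congrArg (fun s : Submodule K V => Module.finrank K s) ?_
  ext x
  simp [LinearMap.mem_ker]
  tauto

theorem hilbFn_add_finrank_idealPiece (I : Ideal (MvPolynomial (Fin n) K)) (i : ℕ) :
    hilbFn I i + Module.finrank K (idealPiece I i) =
      Module.finrank K (homogeneousSubmodule (Fin n) K i) := by
  rw [← finrank_map_add_finrank_inf_ker (Ideal.Quotient.mkₐ K I).toLinearMap
    (homogeneousSubmodule (Fin n) K i)]
  have h : LinearMap.ker (Ideal.Quotient.mkₐ K I).toLinearMap = I.restrictScalars K := by
    ext x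
    simp [Ideal.Quotient.eq_zero_iff_mem]
  rw [h]
  rfl

/-- The pairing `R_i × R_k → K` given by a functional on polynomials. -/
def gradedPairing (φ : MvPolynomial (Fin n) K →ₗ[K] K) (i k : ℕ) :
    homogeneousSubmodule (Fin n) K i →ₗ[K] homogeneousSubmodule (Fin n) K k →ₗ[K] K :=
  ((LinearMap.mul K (MvPolynomial (Fin n) K)).compr₂ φ).domRestrict₁₂ _ _

theorem IsConcentrated.hilbFn_eq_finrank_range {φ : MvPolynomial (Fin n) K →ₗ[K] K} {j : ℕ}
    (hφ : IsConcentrated φ j) {i k : ℕ} (hik : i + k = j) :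
    hilbFn (annIdeal φ) i = Module.finrank K (LinearMap.range (gradedPairing φ i k)) := by
  have h1 := hilbFn_add_finrank_idealPiece (annIdeal φ) i
  have h2 := LinearMap.finrank_range_add_finrank_ker (gradedPairing φ i k)
  have h3 : (LinearMap.ker (gradedPairing φ i k)).map (Submodule.subtype _) =
      idealPiece (annIdeal φ) i := by
    ext x
    simp only [Submodule.mem_map, LinearMap.mem_ker, Submodule.subtype_apply, Subtype.exists,
      exists_and_right, exists_eq_right, mem_idealPiece, mem_homogeneousSubmodule]
    constructor
    · rintro ⟨hx, h⟩
      refine ⟨hx, (hφ.mem_annIdeal_iff hik hx).2 fun r hr => ?_⟩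
      exact congrArg (fun f => f ⟨r, hr⟩) h
    · rintro ⟨hx, h⟩
      exact ⟨hx, LinearMap.ext fun r => h r⟩
  have h4 := (Submodule.equivMapOfInjective _ (Submodule.injective_subtype _)
    (LinearMap.ker (gradedPairing φ i k))).finrank_eq
  rw [h3] at h4
  omega

theorem finrank_range_flip_le {V W : Type*} [AddCommGroup V] [Module K V]
    [AddCommGroup W] [Module K W] [FiniteDimensional K V] (B : V →ₗ[K] W →ₗ[K] K) :
    Module.finrank K (LinearMap.range B.flip) ≤ Module.finrank K (LinearMap.range B) := by
  rw [← LinearMap.finrank_range_dualMap_eq_finrank_range B]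
  have h : B.flip = B.dualMap ∘ₗ Module.Dual.eval K W := by
    ext w v
    simp
  rw [h]
  exact Submodule.finrank_mono (LinearMap.range_comp_le_range _ _)

theorem IsConcentrated.hilbFn_le {φ : MvPolynomial (Fin n) K →ₗ[K] K} {j : ℕ}
    (hφ : IsConcentrated φ j) {i k : ℕ} (hik : i + k = j) :
    hilbFn (annIdeal φ) k ≤ hilbFn (annIdeal φ) i := by
  rw [hφ.hilbFn_eq_finrank_range hik, hφ.hilbFn_eq_finrank_range ((add_comm k i).trans hik)]
  have h : gradedPairing φ k i = (gradedPairing φ i k).flip := by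
    ext x y
    exact congrArg φ (mul_comm _ _)
  rw [h]
  exact finrank_range_flip_le _

/-- Symmetry of the Hilbert function of the algebra defined by a dual functional. -/
theorem IsConcentrated.hilbFn_symm {φ : MvPolynomial (Fin n) K →ₗ[K] K} {j : ℕ}
    (hφ : IsConcentrated φ j) {i k : ℕ} (hik : i + k = j) :
    hilbFn (annIdeal φ) i = hilbFn (annIdeal φ) k :=
  le_antisymm (hφ.hilbFn_le ((add_comm k i).trans hik)) (hφ.hilbFn_le hik)

theorem hilbFn_eq_zero_of_forall_mem {I : Ideal (MvPolynomial (Fin n) K)} {i : ℕ}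
    (h : ∀ p : MvPolynomial (Fin n) K, p.IsHomogeneous i → p ∈ I) : hilbFn I i = 0 := by
  have h1 := hilbFn_add_finrank_idealPiece I i
  have h2 : idealPiece I i = homogeneousSubmodule (Fin n) K i :=
    inf_eq_left.2 fun p hp => h p hp
  rw [h2] at h1
  omega

theorem IsConcentrated.hilbFn_eq_zero {φ : MvPolynomial (Fin n) K →ₗ[K] K} {j : ℕ}
    (hφ : IsConcentrated φ j) {i : ℕ} (hij : j < i) : hilbFn (annIdeal φ) i = 0 :=
  hilbFn_eq_zero_of_forall_mem fun _ hp r => hφ.apply_mul_eq_zero hij hp r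

theorem finrank_homogeneousSubmodule_two (i : ℕ) :
    Module.finrank K (homogeneousSubmodule (Fin 2) K i) = i + 1 := by
  have h : homogeneousSubmodule (Fin 2) K i =
      restrictSupport K (Finset.finsuppAntidiag (Finset.univ : Finset (Fin 2)) i : Set _) := by
    rw [homogeneousSubmodule_eq_finsupp_supported]
    congr 1
    ext d
    simp [Finset.mem_finsuppAntidiag, Finsupp.degree_eq_sum]
  rw [h, Module.finrank_eq_card_basis (basisRestrictSupport K _)]
  simp [Finset.card_finsuppAntidiag_nat_eq_choose, add_comm 1 i]

/-- Growth of a homogeneous ideal in two variables. -/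
theorem finrank_idealPiece_two_succ (J : Ideal (MvPolynomial (Fin 2) K)) (i : ℕ)
    (h : idealPiece J (i + 1) ≠ ⊥) :
    Module.finrank K (idealPiece J i) + 1 ≤ Module.finrank K (idealPiece J (i + 1)) := by
  have hmul : ∀ v : Fin 2, ∀ f ∈ idealPiece J i, X v * f ∈ idealPiece J (i + 1) := by
    intro v f hf
    refine ⟨?_, J.mul_mem_left _ hf.2⟩
    rw [add_comm i 1]
    exact (isHomogeneous_X K v).mul hf.1
  by_cases h0 : idealPiece J i = ⊥
  · rw [h0, finrank_bot, zero_add]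
    exact Submodule.one_le_finrank_iff.2 h
  obtain ⟨f, hf, hf0⟩ := Submodule.exists_mem_ne_zero_of_ne_bot h0
  set m : MvPolynomial (Fin 2) K →ₗ[K] MvPolynomial (Fin 2) K := LinearMap.mulLeft K (X 0) with hm
  have hinj : Function.Injective m := fun a b hab =>
    mul_left_cancel₀ (X_ne_zero (R := K) (0 : Fin 2)) hab
  have hle : (idealPiece J i).map m ≤ idealPiece J (i + 1) := by
    rintro _ ⟨g, hg, rfl⟩
    exact hmul 0 g hg
  have hfin : Module.finrank K ((idealPiece J i).map m) = Module.finrank K (idealPiece J i) :=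
    ((Submodule.equivMapOfInjective m hinj _).finrank_eq).symm
  rw [← hfin]
  refine Submodule.finrank_lt_finrank_of_lt (lt_of_le_of_ne hle fun heq => hf0 ?_)
  have hdvd : ∀ k : ℕ, ∀ g ∈ idealPiece J i, (X 0 : MvPolynomial (Fin 2) K) ^ k ∣ g := by
    intro k
    induction k with
    | zero => intro g _; simp
    | succ k ih =>
      intro g hg
      have h1 := hmul 1 g hg
      rw [← heq] at h1
      obtain ⟨g', hg', h2⟩ := h1
      obtain ⟨q, hq⟩ := ih g' hg'
      have h3 : (X 0 : MvPolynomial (Fin 2) K) ^ (k + 1) ∣ X 1 * g := by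
        refine ⟨q, ?_⟩
        rw [← h2, hm, LinearMap.mulLeft_apply, hq]
        ring
      refine (X_prime (R := K) (i := (0 : Fin 2))).pow_dvd_of_dvd_mul_left _ ?_ h3
      rw [X_dvd_X]
      decide
  by_contra hne
  obtain ⟨q, hq⟩ := hdvd (i + 1) f hf
  have hq0 : q ≠ 0 := by
    rintro rfl
    exact hne (by simpa using hq)
  have h4 := IsHomogeneous.totalDegree hf.1 hne
  rw [hq, totalDegree_mul_of_isDomain (pow_ne_zero _ (X_ne_zero _)) hq0, totalDegree_X_pow] at h4
  omega

/-- Restriction of polynomials in three variables to the plane `X 2 = α * X 0`. -/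
def restrictPlane (α : K) : MvPolynomial (Fin 3) K →ₐ[K] MvPolynomial (Fin 2) K :=
  aeval ![X 0, X 1, C α * X 0]

/-- The linear form defining the plane `X 2 = α * X 0`. -/
def planeForm (α : K) : MvPolynomial (Fin 3) K := X 2 - C α * X 0

theorem isHomogeneous_planeForm (α : K) : (planeForm α).IsHomogeneous 1 :=
  (isHomogeneous_X K 2).sub (isHomogeneous_C_mul_X α 0)

theorem planeForm_ne_zero (α : K) : planeForm α ≠ 0 := by
  intro h
  have h1 := congrArg (eval ![0, 0, 1]) h
  simp [planeForm] at h1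

theorem isHomogeneous_restrictPlane (α : K) {p : MvPolynomial (Fin 3) K} {i : ℕ}
    (hp : p.IsHomogeneous i) : (restrictPlane α p).IsHomogeneous i := by
  have h := hp.aeval (n := 1) (![X 0, X 1, C α * X 0] : Fin 3 → MvPolynomial (Fin 2) K) (by
    intro v
    fin_cases v
    · exact isHomogeneous_X K 0
    · exact isHomogeneous_X K 1
    · exact isHomogeneous_C_mul_X α 0)
  rwa [one_mul] at h

theorem homogeneousComponent_restrictPlane (α : K) (i : ℕ) (p : MvPolynomial (Fin 3) K) :
    homogeneousComponent i (restrictPlane α p) = restrictPlane α (homogeneousComponent i p) := by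
  induction p using MvPolynomial.induction_on' with
  | monomial d c =>
    have h := isHomogeneous_monomial c (rfl : d.degree = d.degree)
    rw [homogeneousComponent_of_mem h,
      homogeneousComponent_of_mem (isHomogeneous_restrictPlane α h)]
    split_ifs <;> simp
  | add p q hp hq => simp [map_add, hp, hq]

/-- The section of `restrictPlane`. -/
def extendPlane : MvPolynomial (Fin 2) K →ₐ[K] MvPolynomial (Fin 3) K := aeval ![X 0, X 1]

theorem restrictPlane_extendPlane (α : K) (q : MvPolynomial (Fin 2) K) :
    restrictPlane α (extendPlane q) = q := by
  have h : (restrictPlane α).comp extendPlane = AlgHom.id K _ := by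
    ext v : 1
    fin_cases v <;> simp [restrictPlane, extendPlane]
  exact DFunLike.congr_fun h q

theorem restrictPlane_surjective (α : K) : Function.Surjective (restrictPlane α) :=
  fun q => ⟨extendPlane q, restrictPlane_extendPlane α q⟩

theorem restrictPlane_planeForm (α : K) : restrictPlane α (planeForm α) = 0 := by
  have h : restrictPlane α (C α) = C α := (restrictPlane α).commutes α
  rw [planeForm, map_sub, map_mul, h]
  simp [restrictPlane]

theorem restrictPlane_eq_zero_iff (α : K) (p : MvPolynomial (Fin 3) K) :
    restrictPlane α p = 0 ↔ planeForm α ∣ p := by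
  constructor
  · intro hp
    set I := Ideal.span {planeForm α}
    have h : ((Ideal.Quotient.mkₐ K I).comp extendPlane).comp (restrictPlane α) =
        Ideal.Quotient.mkₐ K I := by
      ext v : 1
      fin_cases v
      · simp [restrictPlane, extendPlane]
      · simp [restrictPlane, extendPlane]
      · have h : extendPlane (C α : MvPolynomial (Fin 2) K) = C α := extendPlane.commutes α
        simp only [restrictPlane, AlgHom.comp_apply, aeval_X]
        simp only [Fin.reduceFinMk, Matrix.cons_val, map_mul extendPlane, h]
        rw [Ideal.Quotient.mkₐ_eq_mk, Ideal.Quotient.eq, ← neg_mem_iff]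
        have h2 : -(C α * extendPlane (X 0) - X 2 : MvPolynomial (Fin 3) K) = planeForm α := by
          simp [extendPlane, planeForm]
        rw [h2]
        exact Ideal.mem_span_singleton_self _
    have h1 := DFunLike.congr_fun h p
    rw [AlgHom.comp_apply, hp, map_zero, Ideal.Quotient.mkₐ_eq_mk, eq_comm,
      Ideal.Quotient.eq_zero_iff_mem] at h1
    exact Ideal.mem_span_singleton.1 h1
  · rintro ⟨q, rfl⟩
    rw [map_mul, restrictPlane_planeForm, zero_mul]

theorem exists_isHomogeneous_eq_mul {ℓ p : MvPolynomial (Fin n) K} {i : ℕ}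
    (hℓ : ℓ.IsHomogeneous 1) (hp : p.IsHomogeneous (i + 1)) (h : ℓ ∣ p) :
    ∃ q : MvPolynomial (Fin n) K, q.IsHomogeneous i ∧ p = ℓ * q := by
  obtain ⟨q, rfl⟩ := h
  refine ⟨homogeneousComponent i q, homogeneousComponent_isHomogeneous i q, ?_⟩
  have hm : ∀ m, (ℓ * homogeneousComponent m q).IsHomogeneous (m + 1) := fun m => by
    rw [add_comm m 1]
    exact hℓ.mul (homogeneousComponent_isHomogeneous m q)
  rw [← homogeneousComponent_eq_self hp]
  conv_lhs => rw [← sum_homogeneousComponent q, Finset.mul_sum, map_sum]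
  rw [Finset.sum_eq_single i]
  · exact homogeneousComponent_eq_self (hm i)
  · intro m _ hmi
    rw [homogeneousComponent_of_mem (hm m), if_neg (by omega)]
  · intro hi
    rw [homogeneousComponent_eq_zero i, mul_zero, map_zero]
    simpa using hi

/-- The exact sequence relating an ideal, its restriction to a plane and its colon ideal. -/
theorem finrank_idealPiece_succ (α : K) {I I' : Ideal (MvPolynomial (Fin 3) K)}
    (hI : IsHomogIdeal I) (hI' : ∀ p, p ∈ I' ↔ planeForm α * p ∈ I) (i : ℕ) :
    Module.finrank K (idealPiece (I.map (restrictPlane α)) (i + 1)) +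
      Module.finrank K (idealPiece I' i) = Module.finrank K (idealPiece I (i + 1)) := by
  rw [← finrank_map_add_finrank_inf_ker (restrictPlane α).toLinearMap (idealPiece I (i + 1))]
  congr 1
  · refine congrArg (fun s : Submodule K (MvPolynomial (Fin 2) K) => Module.finrank K s) ?_
    ext q
    constructor
    · rintro ⟨hq, hq'⟩
      obtain ⟨p, hp, rfl⟩ :=
        (Ideal.mem_map_iff_of_surjective _ (restrictPlane_surjective α)).1 hq'
      refine ⟨homogeneousComponent (i + 1) p,
        ⟨homogeneousComponent_isHomogeneous _ p, hI p hp _⟩, ?_⟩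
      rw [AlgHom.toLinearMap_apply, ← homogeneousComponent_restrictPlane]
      exact homogeneousComponent_eq_self hq
    · rintro ⟨p, hp, rfl⟩
      exact ⟨isHomogeneous_restrictPlane α hp.1, Ideal.mem_map_of_mem _ hp.2⟩
  · have hinj : Function.Injective (LinearMap.mulLeft K (planeForm α)) := fun a b hab =>
      mul_left_cancel₀ (planeForm_ne_zero α) hab
    rw [(Submodule.equivMapOfInjective _ hinj (idealPiece I' i)).finrank_eq]
    refine congrArg (fun s : Submodule K (MvPolynomial (Fin 3) K) => Module.finrank K s) ?_
    ext p
    constructor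
    · rintro ⟨q, hq, rfl⟩
      refine ⟨⟨?_, (hI' q).1 hq.2⟩, ?_⟩
      · rw [add_comm i 1]
        exact (isHomogeneous_planeForm α).mul hq.1
      · simp [restrictPlane_planeForm]
    · rintro ⟨hp, hp'⟩
      obtain ⟨q, hq, rfl⟩ := exists_isHomogeneous_eq_mul (isHomogeneous_planeForm α) hp.1
        ((restrictPlane_eq_zero_iff α p).1 hp')
      exact ⟨q, ⟨hq, (hI' q).2 hp.2⟩, rfl⟩

theorem hilbFn_succ (α : K) {I I' : Ideal (MvPolynomial (Fin 3) K)}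
    (hI : IsHomogIdeal I) (hI' : ∀ p, p ∈ I' ↔ planeForm α * p ∈ I) (i : ℕ) :
    hilbFn I (i + 1) = hilbFn (I.map (restrictPlane α)) (i + 1) + hilbFn I' i := by
  have h1 := finrank_idealPiece_succ α hI hI' i
  have h2 := finrank_idealPiece_succ (I := ⊤) (I' := ⊤) α (fun _ _ _ => trivial)
    (fun _ => ⟨fun _ => trivial, fun _ => trivial⟩) i
  have htop : ∀ {m : ℕ} (k : ℕ),
      idealPiece (⊤ : Ideal (MvPolynomial (Fin m) K)) k = homogeneousSubmodule (Fin m) K k :=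
    fun k => inf_eq_left.2 fun _ _ => trivial
  rw [Ideal.map_top, htop, htop, htop] at h2
  have h3 := hilbFn_add_finrank_idealPiece I (i + 1)
  have h4 := hilbFn_add_finrank_idealPiece (I.map (restrictPlane α)) (i + 1)
  have h5 := hilbFn_add_finrank_idealPiece I' i
  omega

theorem exists_restrictPlane_ne_zero [Infinite K] {f : MvPolynomial (Fin 3) K} (hf : f ≠ 0) :
    ∃ α : K, restrictPlane α f ≠ 0 := by
  have hfx : f * X 0 ≠ 0 := mul_ne_zero hf (X_ne_zero 0)
  obtain ⟨x, hx⟩ : ∃ x : Fin 3 → K, eval x (f * X 0) ≠ 0 := by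
    by_contra! h
    exact hfx (MvPolynomial.funext fun x => by rw [h x, map_zero])
  rw [map_mul, eval_X] at hx
  have hx0 : x 0 ≠ 0 := right_ne_zero_of_mul hx
  refine ⟨x 2 / x 0, fun h => left_ne_zero_of_mul hx ?_⟩
  have h1 : (aeval ![x 0, x 1]).comp (restrictPlane (x 2 / x 0)) = (aeval x : _ →ₐ[K] K) := by
    ext v
    fin_cases v <;> simp [restrictPlane, hx0]
  have h2 := DFunLike.congr_fun h1 f
  rw [AlgHom.comp_apply, h, map_zero] at h2
  rw [← coe_aeval_eq_eval]
  exact h2.symm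

theorem mem_gradedPiece {I : Ideal (MvPolynomial (Fin n) K)} {i : ℕ}
    {a : MvPolynomial (Fin n) K ⧸ I} :
    a ∈ gradedPiece I i ↔
      ∃ p : MvPolynomial (Fin n) K, p.IsHomogeneous i ∧ Ideal.Quotient.mk I p = a := Iff.rfl

instance finite_gradedPiece (I : Ideal (MvPolynomial (Fin n) K)) (i : ℕ) :
    FiniteDimensional K (gradedPiece I i) := by
  unfold gradedPiece
  infer_instance

theorem hilbFn_eq_zero_iff {I : Ideal (MvPolynomial (Fin n) K)} {i : ℕ} :
    hilbFn I i = 0 ↔ ∀ p : MvPolynomial (Fin n) K, p.IsHomogeneous i → p ∈ I := by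
  refine ⟨fun h p hp => ?_, hilbFn_eq_zero_of_forall_mem⟩
  have h1 : gradedPiece I i = ⊥ := Submodule.finrank_eq_zero.1 h
  have h2 : Ideal.Quotient.mk I p ∈ gradedPiece I i := mem_gradedPiece.2 ⟨p, hp, rfl⟩
  rw [h1, Submodule.mem_bot] at h2
  exact Ideal.Quotient.eq_zero_iff_mem.1 h2

theorem finite_support_hilbFn {I : Ideal (MvPolynomial (Fin n) K)} (hI : IsHomogIdeal I)
    [FiniteDimensional K (MvPolynomial (Fin n) K ⧸ I)] : {i | hilbFn I i ≠ 0}.Finite := by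
  have h : ∀ i : {i | hilbFn I i ≠ 0}, ∃ p : MvPolynomial (Fin n) K,
      p.IsHomogeneous i ∧ p ∉ I := by
    rintro ⟨i, hi⟩
    have h1 := mt hilbFn_eq_zero_iff.2 hi
    push Not at h1
    exact h1
  choose p hp hpI using h
  have hli : LinearIndependent K (fun i => Ideal.Quotient.mk I (p i)) := by
    rw [linearIndependent_iff']
    intro s c hs k hk
    have h1 : ∑ i ∈ s, c i • p i ∈ I := by
      rw [← Ideal.Quotient.eq_zero_iff_mem, ← hs, map_sum]
      rfl
    have h2 := hI _ h1 k
    rw [map_sum, Finset.sum_eq_single k] at h2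
    · rw [map_smul, homogeneousComponent_eq_self (hp k)] at h2
      by_contra hc
      refine hpI k ?_
      have h3 := I.mul_mem_left (C (c k)⁻¹) h2
      rwa [← smul_eq_C_mul, smul_smul, inv_mul_cancel₀ hc, one_smul] at h3
    · intro b _ hb
      rw [map_smul, homogeneousComponent_of_mem (hp b), if_neg, smul_zero]
      exact fun h => hb (Subtype.ext h.symm)
    · exact fun h => absurd hk h
  have := hli.finite
  exact Set.toFinite _

theorem IsAG.one_notMem {I : Ideal (MvPolynomial (Fin n) K)} (hI : IsAG I) : 1 ∉ I :=
  fun h => hI.2.1 ((Ideal.eq_top_iff_one I).2 h)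

theorem IsAG.hilbFn_socDeg_ne_zero {I : Ideal (MvPolynomial (Fin n) K)} (hI : IsAG I) :
    hilbFn I (socDeg I) ≠ 0 := by
  have := hI.2.2.1
  refine Nat.sSup_mem (s := {i | hilbFn I i ≠ 0}) ⟨0, fun h => ?_⟩
    (finite_support_hilbFn hI.1).bddAbove
  exact hI.one_notMem (hilbFn_eq_zero_iff.1 h 1 (isHomogeneous_one _ _))

theorem IsAG.mem_of_socDeg_lt {I : Ideal (MvPolynomial (Fin n) K)} (hI : IsAG I) {i : ℕ}
    (hi : socDeg I < i) {p : MvPolynomial (Fin n) K} (hp : p.IsHomogeneous i) : p ∈ I := by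
  have := hI.2.2.1
  refine hilbFn_eq_zero_iff.1 ?_ p hp
  by_contra h
  exact absurd (le_csSup (finite_support_hilbFn hI.1).bddAbove h) (not_le.2 hi)

theorem mk_mem_socleSub_iff {I : Ideal (MvPolynomial (Fin n) K)} {p : MvPolynomial (Fin n) K} :
    Ideal.Quotient.mk I p ∈ socleSub I ↔ ∀ v, X v * p ∈ I := by
  simp only [socleSub, Submodule.mem_iInf, LinearMap.mem_ker, LinearMap.mulLeft_apply, ← map_mul,
    Ideal.Quotient.eq_zero_iff_mem]

theorem IsAG.gradedPiece_socDeg {I : Ideal (MvPolynomial (Fin n) K)} (hI : IsAG I) :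
    gradedPiece I (socDeg I) = socleSub I := by
  have := hI.2.2.1
  refine Submodule.eq_of_le_of_finrank_le ?_ ?_
  · intro a ha
    obtain ⟨p, hp, rfl⟩ := mem_gradedPiece.1 ha
    exact mk_mem_socleSub_iff.2 fun v =>
      hI.mem_of_socDeg_lt (by omega) ((isHomogeneous_X K v).mul hp)
  · rw [hI.2.2.2]
    exact Nat.one_le_iff_ne_zero.2 hI.hilbFn_socDeg_ne_zero

theorem IsAG.exists_mul_notMem {I : Ideal (MvPolynomial (Fin n) K)} (hI : IsAG I) (k : ℕ) :
    ∀ {i : ℕ}, i + k = socDeg I → ∀ {p : MvPolynomial (Fin n) K}, p.IsHomogeneous i → p ∉ I →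
      ∃ r : MvPolynomial (Fin n) K, r.IsHomogeneous k ∧ p * r ∉ I := by
  induction k with
  | zero =>
    intro i _ p _ hpI
    exact ⟨1, isHomogeneous_one _ _, by rwa [mul_one]⟩
  | succ k ih =>
    intro i hik p hp hpI
    obtain ⟨v, hv⟩ : ∃ v, X v * p ∉ I := by
      by_contra! h
      have h1 := mk_mem_socleSub_iff.2 h
      rw [← hI.gradedPiece_socDeg] at h1
      obtain ⟨q, hq, hqp⟩ := mem_gradedPiece.1 h1
      have h2 := hI.1 _ (Ideal.Quotient.eq.1 hqp) i
      rw [map_sub, homogeneousComponent_eq_self hp, homogeneousComponent_of_mem hq,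
        if_neg (by omega), zero_sub, neg_mem_iff] at h2
      exact hpI h2
    obtain ⟨r, hr, hr'⟩ := ih (i := 1 + i) (by omega) ((isHomogeneous_X K v).mul hp) hv
    refine ⟨X v * r, ?_, ?_⟩
    · rw [add_comm k 1]
      exact (isHomogeneous_X K v).mul hr
    · rwa [← mul_assoc, mul_comm p]

/-- Macaulay duality: a graded Artinian Gorenstein ideal is the annihilator of a functional
concentrated in its socle degree. -/
theorem IsAG.exists_eq_annIdeal {I : Ideal (MvPolynomial (Fin n) K)} (hI : IsAG I) :
    ∃ φ : MvPolynomial (Fin n) K →ₗ[K] K, IsConcentrated φ (socDeg I) ∧ I = annIdeal φ := by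
  have h1 : Module.finrank K (gradedPiece I (socDeg I)) = 1 := by
    rw [hI.gradedPiece_socDeg, hI.2.2.2]
  obtain ⟨w, hw, hspan⟩ := finrank_eq_one_iff'.1 h1
  obtain ⟨f, hf⟩ : ∃ f : Module.Dual K (MvPolynomial (Fin n) K ⧸ I), f w ≠ 0 := by
    by_contra! h
    exact hw (Subtype.ext ((Module.forall_dual_apply_eq_zero_iff K _).1 h))
  have hf' : ∀ p : MvPolynomial (Fin n) K, p.IsHomogeneous (socDeg I) → p ∉ I →
      f (Ideal.Quotient.mk I p) ≠ 0 := by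
    intro p hp hpI
    obtain ⟨c, hc⟩ := hspan ⟨_, mem_gradedPiece.2 ⟨p, hp, rfl⟩⟩
    have hc' : c • (w : MvPolynomial (Fin n) K ⧸ I) = Ideal.Quotient.mk I p :=
      congrArg Subtype.val hc
    rw [← hc', map_smul, smul_eq_mul]
    refine mul_ne_zero ?_ hf
    rintro rfl
    rw [zero_smul] at hc'
    exact hpI (Ideal.Quotient.eq_zero_iff_mem.1 hc'.symm)
  set φ : MvPolynomial (Fin n) K →ₗ[K] K :=
    f ∘ₗ (Ideal.Quotient.mkₐ K I).toLinearMap ∘ₗ homogeneousComponent (socDeg I) with hφ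
  have hφa : ∀ p, φ p = f (Ideal.Quotient.mk I (homogeneousComponent (socDeg I) p)) :=
    fun _ => rfl
  have hconc : IsConcentrated φ (socDeg I) := by
    intro i hi p hp
    rw [hφa, homogeneousComponent_of_mem hp, if_neg hi.symm, map_zero, map_zero]
  refine ⟨φ, hconc, ?_⟩
  ext p
  constructor
  · intro hp r
    rw [hφa, Ideal.Quotient.eq_zero_iff_mem.2 (hI.1 _ (I.mul_mem_right r hp) _), map_zero]
  · intro hp
    by_contra hpI
    obtain ⟨i, hi⟩ : ∃ i, homogeneousComponent i p ∉ I := by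
      by_contra! h
      refine hpI ?_
      rw [← sum_homogeneousComponent p]
      exact I.sum_mem fun i _ => h i
    have hij : i ≤ socDeg I := by
      by_contra! h
      exact hi (hI.mem_of_socDeg_lt h (homogeneousComponent_isHomogeneous i p))
    obtain ⟨k, hk⟩ := Nat.exists_eq_add_of_le hij
    obtain ⟨r, hr, hrI⟩ :=
      hI.exists_mul_notMem k hk.symm (homogeneousComponent_isHomogeneous i p) hi
    have h2 := (homogeneousComponent_isHomogeneous i p).mul hr
    rw [← hk] at h2
    refine hf' _ h2 hrI ?_
    rw [← homogeneousComponent_eq_self h2, ← hφa, mul_comm,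
      ← hconc.apply_mul ((add_comm k i).trans hk.symm) hr, mul_comm]
    exact hp r

/-- The numerical content of Stanley's theorem in codimension three: the Hilbert function of a
graded Gorenstein algebra is controlled by that of a general plane section. -/
theorem IsAG.exists_plane_section [Infinite K] {I : Ideal (MvPolynomial (Fin 3) K)}
    (hI : IsAG I) :
    ∃ (a : ℕ) (c : ℕ → ℕ), hilbFn I 0 = 1 ∧ c 0 ≤ 1 ∧
      (∀ i, i + 1 < a → hilbFn I (i + 1) = hilbFn I i + (i + 2)) ∧
      (∀ i, a ≤ i + 1 → c (i + 1) ≤ c i) ∧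
      (∀ i k, i + k + 1 = socDeg I →
        hilbFn I (i + 1) + c (k + 1) = hilbFn I i + c (i + 1)) := by
  have hfin := hI.2.2.1
  obtain ⟨φ, hφ, hIφ⟩ := hI.exists_eq_annIdeal
  have hsymm : ∀ {i k : ℕ}, i + k = socDeg I → hilbFn I i = hilbFn I k := by
    intro i k hik
    have h := hφ.hilbFn_symm hik
    rwa [← hIφ] at h
  have hex : ∃ a, idealPiece I a ≠ ⊥ := by
    refine ⟨socDeg I + 1, fun h => ?_⟩
    have h1 : (X 0 : MvPolynomial (Fin 3) K) ^ (socDeg I + 1) ∈ idealPiece I (socDeg I + 1) :=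
      ⟨isHomogeneous_X_pow 0 _, hI.mem_of_socDeg_lt (Nat.lt_succ_self _) (isHomogeneous_X_pow 0 _)⟩
    rw [h, Submodule.mem_bot] at h1
    exact pow_ne_zero _ (X_ne_zero _) h1
  obtain ⟨f, hf, hf0⟩ := Submodule.exists_mem_ne_zero_of_ne_bot (Nat.find_spec hex)
  obtain ⟨α, hα⟩ := exists_restrictPlane_ne_zero hf0
  have hbot : ∀ i, i < Nat.find hex → idealPiece I i = ⊥ := fun i hi => by
    simpa using Nat.find_min hex hi
  have hdim : ∀ i, i < Nat.find hex →
      hilbFn I i = Module.finrank K (homogeneousSubmodule (Fin 3) K i) := by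
    intro i hi
    rw [← hilbFn_add_finrank_idealPiece I i, hbot i hi, finrank_bot, add_zero]
  set J := I.map (restrictPlane α) with hJ
  have hJdim : ∀ i, hilbFn J i + Module.finrank K (idealPiece J i) = i + 1 := by
    intro i
    rw [hilbFn_add_finrank_idealPiece, finrank_homogeneousSubmodule_two]
  have hfind : 1 ≤ Nat.find hex := by
    rw [Nat.one_le_iff_ne_zero, ne_eq, Nat.find_eq_zero, not_not]
    refine (Submodule.eq_bot_iff _).2 fun p hp => ?_
    by_contra hp0
    have h1 : p = C (coeff 0 p) := totalDegree_eq_zero_iff_eq_C.1 (by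
      simpa using IsHomogeneous.totalDegree_le hp.1)
    have h2 : coeff 0 p ≠ 0 := fun h => hp0 (by rw [h1, h, map_zero])
    have h3 := I.mul_mem_left (C (coeff 0 p)⁻¹) hp.2
    rw [h1, coeff_C, if_pos rfl, ← C_mul, inv_mul_cancel₀ h2, C_1] at h3
    exact hI.one_notMem h3
  have hJne : ∀ i, Nat.find hex ≤ i → idealPiece J i ≠ ⊥ := by
    intro i hi h
    obtain ⟨k, rfl⟩ := Nat.exists_eq_add_of_le hi
    have h1 : restrictPlane α f * X 0 ^ k ∈ idealPiece J (Nat.find hex + k) :=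
      ⟨(isHomogeneous_restrictPlane α hf.1).mul (isHomogeneous_X_pow 0 k),
        J.mul_mem_right _ (Ideal.mem_map_of_mem _ hf.2)⟩
    rw [h, Submodule.mem_bot] at h1
    exact mul_ne_zero hα (pow_ne_zero _ (X_ne_zero _)) h1
  set φ' : MvPolynomial (Fin 3) K →ₗ[K] K := φ ∘ₗ LinearMap.mulLeft K (planeForm α) with hφ'
  have hsucc : ∀ i, hilbFn I (i + 1) = hilbFn J (i + 1) + hilbFn (annIdeal φ') i := by
    refine hilbFn_succ α hI.1 fun p => ?_
    rw [hIφ]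
    simp only [mem_annIdeal, hφ', LinearMap.comp_apply, LinearMap.mulLeft_apply, mul_assoc]
  have hsymm' : ∀ {i k : ℕ}, i + k + 1 = socDeg I →
      hilbFn (annIdeal φ') i = hilbFn (annIdeal φ') k := by
    intro i k hik
    refine IsConcentrated.hilbFn_symm (j := i + k) (fun m hm p hp => ?_) rfl
    exact hφ (1 + m) (by omega) _ ((isHomogeneous_planeForm α).mul hp)
  refine ⟨Nat.find hex, hilbFn J, ?_, ?_, ?_, ?_, ?_⟩
  · rw [hdim 0 hfind, homogeneousSubmodule_zero]
    rw [Submodule.one_eq_span]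
    exact finrank_span_singleton one_ne_zero
  · have := hJdim 0
    omega
  · intro i hi
    rw [hdim _ hi, hdim i (by omega)]
    have h := hilbFn_succ (I := ⊥) (I' := ⊥) α (fun p hp i => by
      rw [Ideal.mem_bot] at hp ⊢
      rw [hp, map_zero]) (fun p => by simp [planeForm_ne_zero]) i
    have hb : ∀ {m : ℕ} (k : ℕ), hilbFn (⊥ : Ideal (MvPolynomial (Fin m) K)) k =
        Module.finrank K (homogeneousSubmodule (Fin m) K k) := by
      intro m k
      have h1 : idealPiece (⊥ : Ideal (MvPolynomial (Fin m) K)) k = ⊥ :=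
        inf_eq_right.2 bot_le
      rw [← hilbFn_add_finrank_idealPiece ⊥ k, h1, finrank_bot, add_zero]
    rw [Ideal.map_bot, hb, hb, hb, finrank_homogeneousSubmodule_two] at h
    omega
  · intro i hi
    have h1 := finrank_idealPiece_two_succ J i (hJne _ hi)
    have h2 := hJdim i
    have h3 := hJdim (i + 1)
    omega
  · intro i k hik
    have h1 := hsucc i
    have h2 := hsucc k
    have h3 := hsymm' hik
    have h4 : hilbFn I (k + 1) = hilbFn I i := hsymm (by omega)
    omega

/-- A numerical function with the properties of a codimension three Gorenstein sequence is, in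
its first half, counted by a finite lower set of monomials in two variables. -/
theorem exists_lowerSet_of_plane_section {T c : ℕ → ℕ} {a j : ℕ} (h0 : T 0 = 1)
    (hc0 : c 0 ≤ 1) (hT : ∀ i, i + 1 < a → T (i + 1) = T i + (i + 2))
    (hc : ∀ i, a ≤ i + 1 → c (i + 1) ≤ c i)
    (hTc : ∀ i k, i + k + 1 = j → T (i + 1) + c (k + 1) = T i + c (i + 1)) :
    ∃ M : Finset (ℕ × ℕ), IsLowerSet (M : Set (ℕ × ℕ)) ∧ (∀ m ∈ M, 2 * (m.1 + m.2) ≤ j) ∧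
      ∀ i, 2 * i ≤ j → (M.filter fun m => m.1 + m.2 ≤ i).card = T i := by
  have hanti : ∀ i k, a ≤ i + 1 → i ≤ k → c k ≤ c i := by
    intro i k hi hik
    induction k, hik using Nat.le_induction with
    | base => exact le_rfl
    | succ k hk ih => exact (hc k (by omega)).trans ih
  obtain ⟨g, hg0, hgs⟩ : ∃ g : ℕ → ℕ, g 0 = 1 ∧ ∀ i, g (i + 1) = T (i + 1) - T i :=
    ⟨fun i => if i = 0 then 1 else T i - T (i - 1), by simp, by simp⟩
  have hTg : ∀ i, 2 * (i + 1) ≤ j → T (i + 1) = T i + g (i + 1) := by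
    intro i hi
    rw [hgs]
    by_cases hia : i + 1 < a
    · have := hT i hia
      omega
    · have h1 := hTc i (j - i - 1) (by omega)
      have h2 := hanti (i + 1) (j - i - 1 + 1) (by omega) (by omega)
      omega
  have hga : ∀ i, i < a → g i = i + 1 := by
    rintro (_ | i) hi
    · exact hg0
    · rw [hgs, hT i hi]
      omega
  have hgle : ∀ i, a ≤ i + 1 → 2 * (i + 1) ≤ j → g (i + 1) ≤ g i := by
    intro i hi hij
    have h1 := hTc i (j - i - 1) (by omega)
    have h2 := hTg i hij
    have h3 := hc i hi
    rcases i with _ | i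
    · omega
    · have h4 := hTc i (j - (i + 1)) (by omega)
      have h5 := hTg i (by omega)
      have h6 := hanti (j - (i + 1 + 1) + 1) (j - (i + 1) + 1) (by omega) (by omega)
      have h7 : j - (i + 1) - 1 + 1 = j - (i + 1 + 1) + 1 := by omega
      rw [h7] at h1
      omega
  have hgb : ∀ i, 2 * i ≤ j → g i ≤ i + 1 := by
    intro i
    induction i with
    | zero => omega
    | succ i ih =>
      intro hi
      by_cases hia : i + 1 < a
      · exact (hga _ hia).le
      · exact (hgle i (by omega) hi).trans ((ih (by omega)).trans (by omega))
  have hstep : ∀ i, 2 * (i + 1) ≤ j → g (i + 1) ≤ g i ∨ g i = i + 1 ∧ g (i + 1) = i + 2 := by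
    intro i hi
    by_cases hia : i + 1 < a
    · exact Or.inr ⟨hga i (by omega), hga _ hia⟩
    · exact Or.inl (hgle i (by omega) hi)
  obtain ⟨M, hM⟩ : ∃ M : Finset (ℕ × ℕ),
      ∀ m, m ∈ M ↔ 2 * (m.1 + m.2) ≤ j ∧ m.1 < g (m.1 + m.2) :=
    ⟨(Finset.range (j + 1) ×ˢ Finset.range (j + 1)).filter fun m =>
      2 * (m.1 + m.2) ≤ j ∧ m.1 < g (m.1 + m.2), fun m => by
        simp only [Finset.mem_filter, Finset.mem_product, Finset.mem_range]
        omega⟩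
  have hleft : ∀ p q, (p + 1, q) ∈ M → (p, q) ∈ M := by
    intro p q h
    rw [hM] at h ⊢
    simp only at h ⊢
    rw [show p + 1 + q = p + q + 1 by ring] at h
    have := hstep (p + q) h.1
    omega
  have hright : ∀ p q, (p, q + 1) ∈ M → (p, q) ∈ M := by
    intro p q h
    rw [hM] at h ⊢
    simp only at h ⊢
    rw [show p + (q + 1) = p + q + 1 by ring] at h
    have := hstep (p + q) h.1
    omega
  refine ⟨M, ?_, fun m hm => ((hM m).1 hm).1, ?_⟩
  · rintro ⟨p, q⟩ ⟨p', q'⟩ ⟨hp, hq⟩ hmem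
    obtain ⟨k, rfl⟩ := Nat.exists_eq_add_of_le hp
    obtain ⟨l, rfl⟩ := Nat.exists_eq_add_of_le hq
    clear hp hq
    have h1 : (p' + k, q') ∈ M := by
      induction l with
      | zero => exact hmem
      | succ l ih => exact ih (hright _ _ hmem)
    clear hmem
    induction k with
    | zero => exact h1
    | succ k ih => exact ih (hleft _ _ h1)
  · intro i
    induction i with
    | zero =>
      intro _
      rw [h0, Finset.card_eq_one]
      refine ⟨(0, 0), ?_⟩
      ext ⟨p, q⟩
      simp only [Finset.mem_filter, hM, Finset.mem_singleton, Prod.mk.injEq]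
      constructor
      · omega
      · rintro ⟨rfl, rfl⟩
        simp [hg0]
    | succ i ih =>
      intro hi
      have h1 : M.filter (fun m => m.1 + m.2 ≤ i + 1) =
          M.filter (fun m => m.1 + m.2 ≤ i) ∪
            (Finset.range (g (i + 1))).image fun p => (p, i + 1 - p) := by
        ext ⟨p, q⟩
        have := hgb (i + 1) hi
        simp only [Finset.mem_filter, hM, Finset.mem_union, Finset.mem_image, Finset.mem_range,
          Prod.mk.injEq]
        constructor
        · rintro ⟨⟨h1, h2⟩, h3⟩
          rcases Nat.lt_or_ge i (p + q) with h4 | h4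
          · have h5 : p + q = i + 1 := by omega
            rw [h5] at h2
            exact Or.inr ⟨p, h2, rfl, by omega⟩
          · exact Or.inl ⟨⟨h1, h2⟩, h4⟩
        · rintro (⟨⟨h1, h2⟩, h3⟩ | ⟨p', h1, rfl, rfl⟩)
          · exact ⟨⟨h1, h2⟩, by omega⟩
          · have h5 : p' + (i + 1 - p') = i + 1 := by omega
            rw [h5]
            exact ⟨⟨hi, h1⟩, le_rfl⟩
      rw [h1, Finset.card_union_of_disjoint, ih (by omega), Finset.card_image_of_injective,
        Finset.card_range, hTg i hi]
      · intro x y hxy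
        exact (Prod.mk.inj hxy).1
      · rw [Finset.disjoint_left]
        rintro ⟨p, q⟩ hm hm'
        have := hgb (i + 1) hi
        simp only [Finset.mem_filter, Finset.mem_image, Finset.mem_range, Prod.mk.injEq] at hm hm'
        obtain ⟨p', h1, rfl, rfl⟩ := hm'
        omega

theorem degree_eq_of_mem_support {p : MvPolynomial (Fin n) K} {i : ℕ} (hp : p.IsHomogeneous i)
    {d : Fin n →₀ ℕ} (hd : d ∈ p.support) : d.degree = i := by
  rw [Finsupp.degree_eq_weight_one]
  exact hp (mem_support_iff.1 hd)

/-- The functional on polynomials sending each monomial to its coefficient in `F`. -/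
def coeffPairing (F : MvPolynomial (Fin n) K) : MvPolynomial (Fin n) K →ₗ[K] K :=
  (basisMonomials (Fin n) K).constr K fun d => coeff d F

theorem coeffPairing_monomial (F : MvPolynomial (Fin n) K) (d : Fin n →₀ ℕ) (c : K) :
    coeffPairing F (monomial d c) = c * coeff d F := by
  have h : monomial d c = c • basisMonomials (Fin n) K d := by
    rw [coe_basisMonomials, smul_monomial, smul_eq_mul, mul_one]
  rw [h, map_smul, coeffPairing, Module.Basis.constr_basis, smul_eq_mul]

theorem coeffPairing_apply (F p : MvPolynomial (Fin n) K) :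
    coeffPairing F p = ∑ d ∈ p.support, coeff d p * coeff d F := by
  conv_lhs => rw [p.as_sum, map_sum]
  simp only [coeffPairing_monomial]

theorem coeff_contractMon (d e : Fin n →₀ ℕ) (F : MvPolynomial (Fin n) K) :
    coeff e (contractMon d F) = coeff (d + e) F := by
  rw [contractMon, coeff_sum, Finset.sum_eq_single (d + e)]
  · rw [if_pos le_self_add, add_tsub_cancel_left, coeff_monomial, if_pos rfl]
  · intro b _ hb
    split_ifs with h
    · rw [coeff_monomial, if_neg]
      rintro rfl
      exact hb (add_tsub_cancel_of_le h).symm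
    · exact coeff_zero e
  · intro h
    rw [notMem_support_iff.1 h, if_pos le_self_add, map_zero, coeff_zero]

theorem coeff_contract (p F : MvPolynomial (Fin n) K) (e : Fin n →₀ ℕ) :
    coeff e (contract p F) = coeffPairing F (p * monomial e 1) := by
  conv_rhs => rw [p.as_sum, Finset.sum_mul, map_sum]
  simp only [contract, coeff_sum, coeff_smul, coeff_contractMon, monomial_mul, mul_one,
    coeffPairing_monomial, smul_eq_mul]

theorem contract_eq_zero_iff (p F : MvPolynomial (Fin n) K) :
    contract p F = 0 ↔ p ∈ annIdeal (coeffPairing F) := by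
  rw [mem_annIdeal]
  constructor
  · intro h r
    rw [r.as_sum, Finset.mul_sum, map_sum]
    refine Finset.sum_eq_zero fun e _ => ?_
    have h1 : monomial e (coeff e r) = coeff e r • monomial e (1 : K) := by
      rw [smul_monomial, smul_eq_mul, mul_one]
    rw [h1, mul_smul_comm, map_smul, ← coeff_contract, h, coeff_zero, smul_zero]
  · intro h
    ext e
    rw [coeff_contract, h, coeff_zero]

theorem isConcentrated_coeffPairing {F : MvPolynomial (Fin n) K} {j : ℕ}
    (hF : F.IsHomogeneous j) : IsConcentrated (coeffPairing F) j := by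
  intro i hi p hp
  rw [coeffPairing_apply]
  refine Finset.sum_eq_zero fun d hd => ?_
  have h1 : d.degree ≠ j := by
    rw [degree_eq_of_mem_support hp hd]
    exact hi
  rw [hF.coeff_eq_zero h1, mul_zero]

/-- The form of degree `j` whose dual functional is the sum of the evaluations at the points
`(p, q, 1)`, where `(p, q)` runs over `M`. -/
def pointForm (K : Type*) [Field K] (M : Finset (ℕ × ℕ)) (j : ℕ) : MvPolynomial (Fin 3) K :=
  ∑ e ∈ Finset.univ.finsuppAntidiag j,
    monomial e (∑ m ∈ M, (m.1 : K) ^ e 0 * (m.2 : K) ^ e 1)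

theorem coeff_pointForm (M : Finset (ℕ × ℕ)) {j : ℕ} {e : Fin 3 →₀ ℕ} (he : e.degree = j) :
    coeff e (pointForm K M j) = ∑ m ∈ M, (m.1 : K) ^ e 0 * (m.2 : K) ^ e 1 := by
  rw [pointForm, coeff_sum, Finset.sum_eq_single e]
  · rw [coeff_monomial, if_pos rfl]
  · intro b _ hb
    rw [coeff_monomial, if_neg hb]
  · intro h
    refine absurd ?_ h
    rw [Finset.mem_finsuppAntidiag]
    exact ⟨by rw [← he, Finsupp.degree_eq_sum], Finset.subset_univ _⟩

theorem isHomogeneous_pointForm (M : Finset (ℕ × ℕ)) (j : ℕ) :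
    (pointForm K M j).IsHomogeneous j := by
  refine IsHomogeneous.sum _ _ _ fun e he => isHomogeneous_monomial _ ?_
  rw [Finsupp.degree_eq_sum]
  exact (Finset.mem_finsuppAntidiag.1 he).1

theorem coeffPairing_pointForm (M : Finset (ℕ × ℕ)) {j : ℕ} {r : MvPolynomial (Fin 3) K}
    (hr : r.IsHomogeneous j) :
    coeffPairing (pointForm K M j) r = ∑ m ∈ M, eval ![(m.1 : K), (m.2 : K), 1] r := by
  rw [coeffPairing_apply]
  simp only [eval_eq']
  rw [Finset.sum_comm]
  refine Finset.sum_congr rfl fun d hd => ?_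
  rw [coeff_pointForm M (degree_eq_of_mem_support hr hd), Finset.mul_sum]
  simp [Fin.prod_univ_three]

/-- Newton's basis: the form of degree `i` which is a product of linear forms and takes the value
`p.descFactorial m.1 * q.descFactorial m.2` at `(p, q, 1)`. -/
def newtonForm (K : Type*) [Field K] (i : ℕ) (m : ℕ × ℕ) : MvPolynomial (Fin 3) K :=
  (∏ k ∈ Finset.range m.1, (X 0 - C (k : K) * X 2)) *
    (∏ k ∈ Finset.range m.2, (X 1 - C (k : K) * X 2)) * X 2 ^ (i - m.1 - m.2)

theorem isHomogeneous_newtonForm {i : ℕ} {m : ℕ × ℕ} (hm : m.1 + m.2 ≤ i) :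
    (newtonForm K i m).IsHomogeneous i := by
  have h : ∀ (v : Fin 3) (a : ℕ),
      (∏ k ∈ Finset.range a, (X v - C (k : K) * X 2 : MvPolynomial (Fin 3) K)).IsHomogeneous a := by
    intro v a
    have h1 := IsHomogeneous.prod (Finset.range a)
      (fun k => (X v - C (k : K) * X 2 : MvPolynomial (Fin 3) K)) (fun _ => 1) fun k _ =>
        (isHomogeneous_X K v).sub ((isHomogeneous_X K 2).C_mul _)
    simpa using h1
  have h2 := ((h 0 m.1).mul (h 1 m.2)).mul (isHomogeneous_X_pow (R := K) 2 (i - m.1 - m.2))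
  rwa [show m.1 + m.2 + (i - m.1 - m.2) = i by omega] at h2

theorem eval_newtonForm (i : ℕ) (m : ℕ × ℕ) (p q : ℕ) :
    eval ![(p : K), (q : K), 1] (newtonForm K i m) =
      ((p.descFactorial m.1 * q.descFactorial m.2 : ℕ) : K) := by
  have h : ∀ (p a : ℕ), ∏ k ∈ Finset.range a, ((p : K) - k) = (p.descFactorial a : K) := by
    intro p a
    induction a with
    | zero => simp
    | succ a ih =>
      rw [Finset.prod_range_succ, ih, Nat.descFactorial_succ, Nat.cast_mul, mul_comm]
      rcases le_or_gt a p with hap | hap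
      · rw [Nat.cast_sub hap]
      · rw [Nat.descFactorial_of_lt hap, Nat.cast_zero, mul_zero, mul_zero]
  simp [newtonForm, map_prod, h]

theorem X_zero_mul_newtonForm {i a b : ℕ} (h : a + b ≤ i) :
    X 0 * newtonForm K i (a, b) =
      newtonForm K (i + 1) (a + 1, b) + C (a : K) * newtonForm K (i + 1) (a, b) := by
  simp only [newtonForm]
  rw [Finset.prod_range_succ, show i + 1 - (a + 1) - b = i - a - b by omega,
    show i + 1 - a - b = i - a - b + 1 by omega]
  ring

theorem X_one_mul_newtonForm {i a b : ℕ} (h : a + b ≤ i) :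
    X 1 * newtonForm K i (a, b) =
      newtonForm K (i + 1) (a, b + 1) + C (b : K) * newtonForm K (i + 1) (a, b) := by
  simp only [newtonForm]
  rw [Finset.prod_range_succ, show i + 1 - a - (b + 1) = i - a - b by omega,
    show i + 1 - a - b = i - a - b + 1 by omega]
  ring

theorem X_two_mul_newtonForm {i a b : ℕ} (h : a + b ≤ i) :
    X 2 * newtonForm K i (a, b) = newtonForm K (i + 1) (a, b) := by
  simp only [newtonForm]
  rw [show i + 1 - a - b = i - a - b + 1 by omega]
  ring

theorem homogeneousSubmodule_le_span_newtonForm (i : ℕ) :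
    homogeneousSubmodule (Fin 3) K i ≤
      Submodule.span K (newtonForm K i '' {m | m.1 + m.2 ≤ i}) := by
  have hmul : ∀ (v : Fin 3) (i : ℕ) (p : MvPolynomial (Fin 3) K),
      p ∈ Submodule.span K (newtonForm K i '' {m | m.1 + m.2 ≤ i}) →
      X v * p ∈ Submodule.span K (newtonForm K (i + 1) '' {m | m.1 + m.2 ≤ i + 1}) := by
    intro v i p hp
    induction hp using Submodule.span_induction with
    | mem x hx =>
      obtain ⟨⟨a, b⟩, hm, rfl⟩ := hx
      have hm' : a + b ≤ i := hm
      have hs : ∀ a' b', a' + b' ≤ i + 1 → newtonForm K (i + 1) (a', b') ∈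
          Submodule.span K (newtonForm K (i + 1) '' {m | m.1 + m.2 ≤ i + 1}) := fun a' b' h =>
        Submodule.subset_span ⟨(a', b'), h, rfl⟩
      fin_cases v
      · have h1 := X_zero_mul_newtonForm (K := K) hm'
        rw [← smul_eq_C_mul] at h1
        exact h1 ▸ add_mem (hs _ _ (by omega)) (Submodule.smul_mem _ _ (hs _ _ (by omega)))
      · have h1 := X_one_mul_newtonForm (K := K) hm'
        rw [← smul_eq_C_mul] at h1
        exact h1 ▸ add_mem (hs _ _ (by omega)) (Submodule.smul_mem _ _ (hs _ _ (by omega)))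
      · exact X_two_mul_newtonForm (K := K) hm' ▸ hs _ _ (by omega)
    | zero =>
      rw [mul_zero]
      exact zero_mem _
    | add x y _ _ hx hy =>
      rw [mul_add]
      exact add_mem hx hy
    | smul c x _ hx =>
      rw [mul_smul_comm]
      exact Submodule.smul_mem _ _ hx
  have hmon : ∀ (i : ℕ) (d : Fin 3 →₀ ℕ), d.degree = i →
      monomial d (1 : K) ∈ Submodule.span K (newtonForm K i '' {m | m.1 + m.2 ≤ i}) := by
    intro i
    induction i with
    | zero =>
      intro d hd
      refine Submodule.subset_span ⟨(0, 0), le_refl 0, ?_⟩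
      rw [(Finsupp.degree_eq_zero_iff d).1 hd]
      simp [newtonForm]
    | succ i ih =>
      intro d hd
      obtain ⟨v, hv⟩ : ∃ v, d v ≠ 0 := by
        by_contra! h
        have h1 : d = 0 := Finsupp.ext h
        rw [h1, map_zero] at hd
        omega
      have hle : Finsupp.single v 1 ≤ d :=
        Finsupp.single_le_iff.2 (Nat.one_le_iff_ne_zero.2 hv)
      obtain ⟨d', rfl⟩ := exists_add_of_le hle
      rw [map_add, Finsupp.degree_single] at hd
      have h1 := hmul v i _ (ih d' (by omega))
      rwa [X, monomial_mul, mul_one] at h1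
  intro p hp
  rw [p.as_sum]
  refine Submodule.sum_mem _ fun d hd => ?_
  have h1 : monomial d (coeff d p) = coeff d p • monomial d (1 : K) := by
    rw [smul_monomial, smul_eq_mul, mul_one]
  rw [h1]
  exact Submodule.smul_mem _ _ (hmon i d (degree_eq_of_mem_support hp hd))

/-- The exponents in `M` of total degree at most `i`. -/
def truncation (M : Finset (ℕ × ℕ)) (i : ℕ) : Finset (ℕ × ℕ) := M.filter fun m => m.1 + m.2 ≤ i

theorem mem_truncation {M : Finset (ℕ × ℕ)} {i : ℕ} {m : ℕ × ℕ} :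
    m ∈ truncation M i ↔ m ∈ M ∧ m.1 + m.2 ≤ i := Finset.mem_filter

/-- The matrix, in Newton forms with exponents in `M`, of the bilinear form
`(f, g) ↦ φ (X 2 ^ k * f * g)` on forms of degree `i`. -/
def newtonGram (M : Finset (ℕ × ℕ)) (i k : ℕ) (φ : MvPolynomial (Fin 3) K →ₗ[K] K) :
    Matrix (truncation M i) (truncation M i) K :=
  Matrix.of fun m m' => φ (X 2 ^ k * newtonForm K i m * newtonForm K i m')

theorem det_descFactorial_gram_ne_zero (M S : Finset (ℕ × ℕ)) (hS : S ⊆ M) :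
    (Matrix.of fun m m' : S => ∑ p ∈ M,
      ((p.1.descFactorial m.1.1 * p.2.descFactorial m.1.2 *
        (p.1.descFactorial m'.1.1 * p.2.descFactorial m'.1.2) : ℕ) : ℤ)).det ≠ 0 := by
  set V : Matrix S M ℝ := Matrix.of fun m p =>
    ((p.1.1.descFactorial m.1.1 * p.1.2.descFactorial m.1.2 : ℕ) : ℝ) with hV
  intro h
  have h1 := congrArg (Int.castRingHom ℝ) h
  rw [RingHom.map_det, map_zero] at h1
  obtain ⟨v, hv0, hv⟩ := Matrix.exists_vecMul_eq_zero_iff.2 h1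
  have h2 : (Int.castRingHom ℝ).mapMatrix (Matrix.of fun m m' : S => ∑ p ∈ M,
      ((p.1.descFactorial m.1.1 * p.2.descFactorial m.1.2 *
        (p.1.descFactorial m'.1.1 * p.2.descFactorial m'.1.2) : ℕ) : ℤ)) = V * V.conjTranspose := by
    ext m m'
    rw [Matrix.mul_apply]
    refine Eq.trans ?_ (Finset.sum_coe_sort M fun p : ℕ × ℕ =>
      ((p.1.descFactorial m.1.1 * p.2.descFactorial m.1.2 : ℕ) : ℝ) *
        star ((p.1.descFactorial m'.1.1 * p.2.descFactorial m'.1.2 : ℕ) : ℝ)).symm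
    simp
  rw [h2, Matrix.vecMul_self_mul_conjTranspose_eq_zero] at hv
  obtain ⟨m₀, hm₀, hmin⟩ := Finset.exists_min_image (Finset.univ.filter fun m => v m ≠ 0)
    (fun m : S => m.1.1 + m.1.2) (by
      obtain ⟨m, hm⟩ := Function.ne_iff.1 hv0
      exact ⟨m, by simpa using hm⟩)
  have h3 : v m₀ ≠ 0 := (Finset.mem_filter.1 hm₀).2
  have h4 : ∑ m, v m * V m ⟨m₀, hS m₀.2⟩ = 0 := congrFun hv ⟨m₀, hS m₀.2⟩
  rw [Finset.sum_eq_single m₀] at h4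
  · refine mul_ne_zero h3 ?_ h4
    simp [hV, Nat.descFactorial_self, Nat.factorial_ne_zero]
  · intro m _ hm
    by_contra h5
    have h6 := hmin m (by simpa using left_ne_zero_of_mul h5)
    have h7 : m₀.1.1.descFactorial m.1.1 * m₀.1.2.descFactorial m.1.2 ≠ 0 :=
      Nat.cast_ne_zero.1 (right_ne_zero_of_mul h5)
    have h8 := mt Nat.descFactorial_eq_zero_iff_lt.2 (left_ne_zero_of_mul h7)
    have h9 := mt Nat.descFactorial_eq_zero_iff_lt.2 (right_ne_zero_of_mul h7)
    refine hm (Subtype.ext (Prod.ext ?_ ?_)) <;> omega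
  · simp

theorem det_newtonGram_pointForm_ne_zero [CharZero K] (M : Finset (ℕ × ℕ)) {i k j : ℕ}
    (hj : 2 * i + k = j) :
    (newtonGram M i k (coeffPairing (pointForm K M j))).det ≠ 0 := by
  have h := det_descFactorial_gram_ne_zero M (truncation M i) (Finset.filter_subset _ _)
  have h0 := (map_ne_zero_iff (Int.castRingHom K) (RingHom.injective_int _)).2 h
  rw [RingHom.map_det] at h0
  convert h0 using 2
  ext m m'
  have h1 := (mem_truncation.1 m.2).2
  have h2 := (mem_truncation.1 m'.2).2
  have h3 := ((isHomogeneous_X_pow (R := K) (2 : Fin 3) k).mul (isHomogeneous_newtonForm h1)).mul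
    (isHomogeneous_newtonForm h2)
  rw [show k + i + i = j by omega] at h3
  rw [newtonGram, Matrix.of_apply, coeffPairing_pointForm M h3]
  simp only [map_mul, eval_newtonForm]
  simp

theorem eq_zero_of_det_newtonGram_ne_zero {M : Finset (ℕ × ℕ)} {i k : ℕ}
    {φ : MvPolynomial (Fin 3) K →ₗ[K] K} (hdet : (newtonGram M i k φ).det ≠ 0)
    {c : truncation M i → K}
    (h : X 2 ^ k * ∑ m, c m • newtonForm K i m.1 ∈ annIdeal φ) : c = 0 := by
  by_contra hc
  refine hdet (Matrix.exists_vecMul_eq_zero_iff.1 ⟨c, hc, ?_⟩)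
  ext m'
  have h1 := h (newtonForm K i m'.1)
  rw [Finset.mul_sum, Finset.sum_mul, map_sum] at h1
  rw [Pi.zero_apply, ← h1]
  refine Finset.sum_congr rfl fun m _ => ?_
  rw [mul_smul_comm, smul_mul_assoc, map_smul]
  rfl

/-- The class of a Newton form in the graded quotient. -/
def newtonClass (I : Ideal (MvPolynomial (Fin 3) K)) (M : Finset (ℕ × ℕ)) (i : ℕ)
    (m : truncation M i) : gradedPiece I i :=
  ⟨Ideal.Quotient.mk I (newtonForm K i m.1),
    mem_gradedPiece.2 ⟨_, isHomogeneous_newtonForm (mem_truncation.1 m.2).2, rfl⟩⟩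

theorem coe_sum_smul_newtonClass (I : Ideal (MvPolynomial (Fin 3) K)) (M : Finset (ℕ × ℕ)) (i : ℕ)
    (c : truncation M i → K) :
    ((∑ m, c m • newtonClass I M i m : gradedPiece I i) : MvPolynomial (Fin 3) K ⧸ I) =
      Ideal.Quotient.mk I (∑ m, c m • newtonForm K i m.1) := by
  rw [Submodule.coe_sum, map_sum]
  rfl

theorem linearIndependent_newtonClass {M : Finset (ℕ × ℕ)} {i k : ℕ}
    {φ : MvPolynomial (Fin 3) K →ₗ[K] K} (hdet : (newtonGram M i k φ).det ≠ 0) :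
    LinearIndependent K (newtonClass (annIdeal φ) M i) := by
  rw [Fintype.linearIndependent_iff]
  intro c hc
  have h1 := congrArg Subtype.val hc
  rw [coe_sum_smul_newtonClass, Submodule.coe_zero, Ideal.Quotient.eq_zero_iff_mem] at h1
  exact congrFun (eq_zero_of_det_newtonGram_ne_zero hdet (Ideal.mul_mem_left _ _ h1))

theorem card_truncation_le_hilbFn {M : Finset (ℕ × ℕ)} {i k : ℕ}
    {φ : MvPolynomial (Fin 3) K →ₗ[K] K} (hdet : (newtonGram M i k φ).det ≠ 0) :
    (truncation M i).card ≤ hilbFn (annIdeal φ) i := by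
  have h := (linearIndependent_newtonClass hdet).fintype_card_le_finrank
  rwa [Fintype.card_coe] at h

theorem powMulBij_of_det_newtonGram_ne_zero {M : Finset (ℕ × ℕ)} {i k : ℕ}
    {φ : MvPolynomial (Fin 3) K →ₗ[K] K} (hφ : IsConcentrated φ (2 * i + k))
    (hcard : (truncation M i).card = hilbFn (annIdeal φ) i)
    (hdet : (newtonGram M i k φ).det ≠ 0) :
    PowMulBij (annIdeal φ) (Ideal.Quotient.mk _ (X 2)) k i (i + k) := by
  have hinj : ∀ a ∈ gradedPiece (annIdeal φ) i,
      Ideal.Quotient.mk (annIdeal φ) (X 2) ^ k * a = 0 → a = 0 := by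
    intro a ha h0
    have hspan := (linearIndependent_newtonClass hdet).span_eq_top_of_card_eq_finrank'
      ((Fintype.card_coe _).trans hcard)
    obtain ⟨c, hc⟩ := (Submodule.mem_span_range_iff_exists_fun K).1
      (hspan ▸ Submodule.mem_top (x := (⟨a, ha⟩ : gradedPiece (annIdeal φ) i)))
    have hc' := congrArg Subtype.val hc
    rw [coe_sum_smul_newtonClass] at hc'
    simp only at hc'
    rw [← hc', ← map_pow, ← map_mul, Ideal.Quotient.eq_zero_iff_mem] at h0
    have h1 := eq_zero_of_det_newtonGram_ne_zero hdet h0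
    simp [← hc', h1]
  refine ⟨hinj, fun b hb => ?_⟩
  set f : gradedPiece (annIdeal φ) i →ₗ[K] gradedPiece (annIdeal φ) (i + k) :=
    (LinearMap.mulLeft K (Ideal.Quotient.mk (annIdeal φ) (X 2) ^ k)).restrict (by
      intro a ha
      obtain ⟨p, hp, rfl⟩ := mem_gradedPiece.1 ha
      refine mem_gradedPiece.2 ⟨X 2 ^ k * p, ?_, ?_⟩
      · rw [add_comm i k]
        exact (isHomogeneous_X_pow 2 k).mul hp
      · rw [map_mul, map_pow, LinearMap.mulLeft_apply]) with hf
  have hfi : Function.Injective f := by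
    rw [← LinearMap.ker_eq_bot, LinearMap.ker_eq_bot']
    exact fun a ha => Subtype.ext (hinj a a.2 (congrArg Subtype.val ha))
  have hdim : Module.finrank K (gradedPiece (annIdeal φ) i) =
      Module.finrank K (gradedPiece (annIdeal φ) (i + k)) :=
    hφ.hilbFn_symm (by omega)
  obtain ⟨a, ha⟩ := (LinearMap.injective_iff_surjective_of_finrank_eq_finrank hdim).1 hfi ⟨b, hb⟩
  exact ⟨a, a.2, congrArg Subtype.val ha⟩

theorem newtonForm_mem_annIdeal_pointForm {M : Finset (ℕ × ℕ)}
    (hM : IsLowerSet (M : Set (ℕ × ℕ))) {i j : ℕ} (hij : i ≤ j) {m : ℕ × ℕ} (hm : m.1 + m.2 ≤ i)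
    (hmM : m ∉ M) : newtonForm K i m ∈ annIdeal (coeffPairing (pointForm K M j)) := by
  obtain ⟨k, rfl⟩ := Nat.exists_eq_add_of_le hij
  have hf := isHomogeneous_newtonForm (K := K) hm
  refine ((isConcentrated_coeffPairing (isHomogeneous_pointForm M (i + k))).mem_annIdeal_iff rfl
    hf).2 fun r hr => ?_
  rw [coeffPairing_pointForm M (hf.mul hr)]
  refine Finset.sum_eq_zero fun p hp => ?_
  rw [map_mul, eval_newtonForm]
  have h : p.1.descFactorial m.1 * p.2.descFactorial m.2 = 0 := by
    by_contra h
    have h1 := mt Nat.descFactorial_eq_zero_iff_lt.2 (left_ne_zero_of_mul h)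
    have h2 := mt Nat.descFactorial_eq_zero_iff_lt.2 (right_ne_zero_of_mul h)
    exact hmM (hM ⟨not_lt.1 h1, not_lt.1 h2⟩ hp)
  rw [h, Nat.cast_zero, zero_mul]

theorem hilbFn_pointForm_le {M : Finset (ℕ × ℕ)} (hM : IsLowerSet (M : Set (ℕ × ℕ))) {i j : ℕ}
    (hij : i ≤ j) :
    hilbFn (annIdeal (coeffPairing (pointForm K M j))) i ≤ (truncation M i).card := by
  set I := annIdeal (coeffPairing (pointForm K M j)) with hI
  have h1 : gradedPiece I i ≤ Submodule.span K
      ((truncation M i).image fun m => Ideal.Quotient.mk I (newtonForm K i m) : Set _) := by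
    refine (Submodule.map_mono (homogeneousSubmodule_le_span_newtonForm i)).trans ?_
    rw [Submodule.map_span, Submodule.span_le]
    rintro _ ⟨_, ⟨m, hm, rfl⟩, rfl⟩
    by_cases hmM : m ∈ M
    · refine Submodule.subset_span ?_
      rw [Finset.coe_image]
      exact ⟨m, mem_truncation.2 ⟨hmM, hm⟩, rfl⟩
    · have h2 : (Ideal.Quotient.mkₐ K I).toLinearMap (newtonForm K i m) = 0 :=
        Ideal.Quotient.eq_zero_iff_mem.2 (newtonForm_mem_annIdeal_pointForm hM hij hm hmM)
      rw [h2]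
      exact zero_mem _
  exact (Submodule.finrank_mono h1).trans ((finrank_span_finset_le_card _).trans
    Finset.card_image_le)

theorem hilbFn_pointForm [CharZero K] {M : Finset (ℕ × ℕ)} (hM : IsLowerSet (M : Set (ℕ × ℕ)))
    {i j : ℕ} (hij : 2 * i ≤ j) :
    hilbFn (annIdeal (coeffPairing (pointForm K M j))) i = (truncation M i).card := by
  obtain ⟨k, hk⟩ := Nat.exists_eq_add_of_le hij
  exact le_antisymm (hilbFn_pointForm_le hM (by omega))
    (card_truncation_le_hilbFn (det_newtonGram_pointForm_ne_zero M hk.symm))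

/-- The value of `coeffPairing F` at `r`, as a polynomial in the coefficients of `F`. -/
def genericPairing (r : MvPolynomial (Fin n) K) : MvPolynomial (Fin n →₀ ℕ) K :=
  ∑ d ∈ r.support, C (coeff d r) * X d

theorem eval_genericPairing (F r : MvPolynomial (Fin n) K) :
    eval (fun d => coeff d F) (genericPairing r) = coeffPairing F r := by
  simp [genericPairing, coeffPairing_apply]

/-- The product of the Gram determinants whose nonvanishing forces `X 2` to be a strong Lefschetz
element, as a polynomial in the coefficients of the dual generator. -/
def lefschetzDiscriminant (K : Type*) [Field K] (M : Finset (ℕ × ℕ)) (j : ℕ) :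
    MvPolynomial (Fin 3 →₀ ℕ) K :=
  ∏ i ∈ Finset.range (j / 2 + 1), (Matrix.of fun m m' : truncation M i =>
    genericPairing (X 2 ^ (j - 2 * i) * newtonForm K i m * newtonForm K i m')).det

theorem eval_lefschetzDiscriminant (M : Finset (ℕ × ℕ)) (j : ℕ) (F : MvPolynomial (Fin 3) K) :
    eval (fun d => coeff d F) (lefschetzDiscriminant K M j) =
      ∏ i ∈ Finset.range (j / 2 + 1), (newtonGram M i (j - 2 * i) (coeffPairing F)).det := by
  rw [lefschetzDiscriminant, map_prod]
  refine Finset.prod_congr rfl fun i _ => ?_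
  rw [RingHom.map_det]
  congr 1
  ext m m'
  exact eval_genericPairing F _

/-- assume `char K = 0` and let `T` be a codimension three Gorenstein
sequence (realized by some AG quotient of `k[x,y,z]`, of socle degree `j`). Then the
strong Lefschetz algebras form a nonempty (Zariski-)open subset of `Gor(T)`:
parametrizing `Gor(T)` by Macaulay dual generators `F ∈ S_j`, there is a polynomial
`P` in the coefficients of `F` that is nonzero at some point of `Gor(T)`, such that
every `F` with Hilbert function `T` and `P(F) ≠ 0` yields a strong Lefschetz
algebra `R/Ann(F)`. -/
theorem stmt17 (hchar : CharZero K) (T : ℕ → ℕ) (j : ℕ)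
    (hGor : ∃ I : Ideal (MvPolynomial (Fin 3) K),
      IsAG I ∧ T 1 = 3 ∧ socDeg I = j ∧ ∀ i, hilbFn I i = T i) :
    ∃ P : MvPolynomial ((Fin 3) →₀ ℕ) K,
      (∃ (F : MvPolynomial (Fin 3) K) (I : Ideal (MvPolynomial (Fin 3) K)),
        F.IsHomogeneous j ∧ (∀ p, p ∈ I ↔ contract p F = 0) ∧
        (∀ i, hilbFn I i = T i) ∧ eval (fun d => coeff d F) P ≠ 0) ∧
      (∀ (F : MvPolynomial (Fin 3) K) (I : Ideal (MvPolynomial (Fin 3) K)),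
        F.IsHomogeneous j → (∀ p, p ∈ I ↔ contract p F = 0) →
        (∀ i, hilbFn I i = T i) → eval (fun d => coeff d F) P ≠ 0 →
        StrongLefschetz I) := by
  obtain ⟨I₀, hI₀, -, hj, hT⟩ := hGor
  obtain ⟨a, c, h0, hc0, hTa, hc, hTc⟩ := hI₀.exists_plane_section
  obtain ⟨M, hM, -, hcard⟩ := exists_lowerSet_of_plane_section h0 hc0 hTa hc hTc
  obtain ⟨φ₀, hφ₀, hIφ₀⟩ := hI₀.exists_eq_annIdeal
  rw [hj] at hcard hφ₀
  simp only [hT] at hcard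
  have hsymm : ∀ {i k : ℕ}, i + k = j → T i = T k := fun {i k} hik => by
    rw [← hT, ← hT, hIφ₀, hφ₀.hilbFn_symm hik]
  refine ⟨lefschetzDiscriminant K M j,
    ⟨pointForm K M j, annIdeal (coeffPairing (pointForm K M j)), isHomogeneous_pointForm M j,
      fun p => (contract_eq_zero_iff p _).symm, fun i => ?_, ?_⟩, fun F I hF hIF hIT hP => ?_⟩
  · have hconc := isConcentrated_coeffPairing (isHomogeneous_pointForm (K := K) M j)
    rcases le_or_gt (2 * i) j with hi | hi
    · exact (hilbFn_pointForm hM hi).trans (hcard i hi)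
    rcases le_or_gt i j with hij | hij
    · obtain ⟨k, hk⟩ := Nat.exists_eq_add_of_le hij
      rw [hconc.hilbFn_symm hk.symm, hsymm hk.symm]
      exact (hilbFn_pointForm hM (by omega)).trans (hcard k (by omega))
    · rw [hconc.hilbFn_eq_zero hij, ← hT, hIφ₀, hφ₀.hilbFn_eq_zero hij]
  · rw [eval_lefschetzDiscriminant]
    refine Finset.prod_ne_zero_iff.2 fun i hi => det_newtonGram_pointForm_ne_zero M ?_
    have := Finset.mem_range.1 hi
    omega
  · obtain rfl : I = annIdeal (coeffPairing F) :=
      Ideal.ext fun p => (hIF p).trans (contract_eq_zero_iff p F)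
    have hsoc : socDeg (annIdeal (coeffPairing F)) = j := by
      rw [← hj]
      simp only [socDeg, hIT, hT]
    refine ⟨Ideal.Quotient.mk _ (X 2), mem_gradedPiece.2 ⟨X 2, isHomogeneous_X K 2, rfl⟩, ?_⟩
    intro i hi
    rw [hsoc] at hi ⊢
    rw [eval_lefschetzDiscriminant] at hP
    have hdet := Finset.prod_ne_zero_iff.1 hP i (Finset.mem_range.2 (by omega))
    have hF' := isConcentrated_coeffPairing hF
    rw [show j = 2 * i + (j - 2 * i) by omega] at hF'
    have h := powMulBij_of_det_newtonGram_ne_zero hF' ((hcard i hi).trans (hIT i).symm) hdet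
    rwa [show i + (j - 2 * i) = j - i by omega] at h
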